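/- Fix a smooth function φ: ℝ → [0,1] with φ ≡ 0 on (−∞,1/2] and φ ≡ 1 on [1,∞). Then there exists a constant C > 0 such that for every b ∈ C_c^∞(𝓗^{n-1}), every η > 0, every f ∈ L¹_loc(𝓗^{n-1}) and every g ∈ 𝓗^{n-1}, |[b,𝒞_η]f(g) − [b,𝒞]f(g)| ≤ C η ‖∇_H b‖_{L^∞(𝓗^{n-1})} · Mf(g). -/

import Mathlib

/-!
The smooth truncation at scale `η` and the sharp truncation at scale `ε < η` have integrands that
agree outside the ball `ρ(g, ·) < η`, so their difference is at most the integral of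
`|b(g) - b(h)| |K(g, h)| |f(h)|` over that punctured ball (`truncation_diff`); letting `ε → 0` gives
the same bound for the difference with the principal value. That integral is `O(η ‖∇_H b‖_∞ Mf(g))`
(`lintegral_near_le`), by summing a geometric series over dyadic annuli, because of three facts:

* `lipschitz`: `|b(g) - b(h)| ≲ ρ(g, h) ‖∇_H b‖_∞`. Writing `h⁻¹ g = (t, y) = (0, y) (t, 0)`, the
  factor `(0, y)` is the end of a horizontal segment of length `O(ρ)`, and each coordinate of the
  central factor `(t, 0)` is a group commutator of two horizontal displacements of length `O(ρ)`.
* `Kker2_bound`: `|K(g, h)| ≲ ρ(g, h)^{-Q}` with `Q = 4n + 2`. Here `s` is homogeneous of degree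
  `-3 - 2(n - 1)` and continuous on `ℍ ∖ {0}`, hence bounded on the unit sphere, and
  `||y|² + t| = ‖(t, y)‖²`.
* `lintegral_ball_le`: `∫_{B(g, r)} |f| ≲ r^Q Mf(g)`, from the upper bound `|B(g, r)| ≲ r^Q`.

For `f` only locally integrable, the truncated integrals may diverge at infinity. They then diverge
for the smooth and for all the sharp truncations at once, and all these Bochner integrals are `0`.
-/

open MeasureTheory Filter Topology ENNReal NNReal
noncomputable section

namespace QHeis

abbrev G (n : ℕ) := (Fin 3 → ℝ) × (Fin (4*(n-1)) → ℝ)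

def bmat : Fin 3 → Fin 4 → Fin 4 → ℝ :=
  ![![![0,1,0,0], ![-1,0,0,0], ![0,0,0,-1], ![0,0,1,0]],
    ![![0,0,1,0], ![0,0,0,1], ![-1,0,0,0], ![0,-1,0,0]],
    ![![0,0,0,1], ![0,0,-1,0], ![0,1,0,0], ![-1,0,0,0]]]

def idx {n : ℕ} (l : Fin (n-1)) (k : Fin 4) : Fin (4*(n-1)) :=
  ⟨4 * l.1 + k.1, by have h1 := l.2; have h2 := k.2; omega⟩

def mul {n : ℕ} (a b : G n) : G n :=
  (fun α => a.1 α + b.1 α +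
      2 * ∑ l : Fin (n-1), ∑ k : Fin 4, ∑ j : Fin 4,
        bmat α k j * a.2 (idx l k) * b.2 (idx l j),
    a.2 + b.2)

def inv {n : ℕ} (a : G n) : G n := (-a.1, -a.2)

def hnorm {n : ℕ} (g : G n) : ℝ :=
  ((∑ i, (g.2 i)^2)^2 + ∑ α, (g.1 α)^2) ^ ((4:ℝ)⁻¹)

def rho {n : ℕ} (h g : G n) : ℝ := hnorm (mul (inv g) h)

def ball {n : ℕ} (g : G n) (r : ℝ) : Set (G n) := {h | rho h g < r}

def dil {n : ℕ} (r : ℝ) (g : G n) : G n := (fun α => r^2 * g.1 α, fun i => r * g.2 i)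

def avg {n : ℕ} (B : Set (G n)) (f : G n → ℝ) : ℝ := (volume B).toReal⁻¹ * ∫ x in B, f x

def oscB {n : ℕ} (f : G n → ℝ) (g : G n) (r : ℝ) : ℝ :=
  avg (ball g r) (fun x => |f x - avg (ball g r) f|)

def IsLocInt {n : ℕ} (f : G n → ℝ) : Prop :=
  ∀ (g : G n) (r : ℝ), 0 < r → IntegrableOn f (ball g r)

def InBMO {n : ℕ} (b : G n → ℝ) : Prop :=
  IsLocInt b ∧ ∃ C : ℝ, ∀ (g : G n) (r : ℝ), 0 < r → oscB b g r ≤ C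

def bmoNorm {n : ℕ} (b : G n → ℝ) : ℝ :=
  sInf {C : ℝ | 0 ≤ C ∧ ∀ (g : G n) (r : ℝ), 0 < r → oscB b g r ≤ C}

def InVMO {n : ℕ} (b : G n → ℝ) : Prop :=
  InBMO b ∧ ∀ ε : ℝ, 0 < ε → ∃ φ : G n → ℝ, ContDiff ℝ (⊤ : ℕ∞) φ ∧ HasCompactSupport φ ∧
    InBMO (fun x => b x - φ x) ∧ bmoNorm (fun x => b x - φ x) < ε

def wInt {n : ℕ} (w : G n → ℝ) (E : Set (G n)) : ℝ≥0∞ := ∫⁻ x in E, ENNReal.ofReal (w x)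

def IsApGt1 {n : ℕ} (p : ℝ) (w : G n → ℝ) : Prop :=
  ∃ C : ℝ, ∀ (g : G n) (r : ℝ), 0 < r →
    (wInt w (ball g r) / volume (ball g r)) *
      ((∫⁻ x in ball g r, (ENNReal.ofReal (w x)) ^ (-(1/(p-1)))) / volume (ball g r)) ^ (p-1)
      ≤ ENNReal.ofReal C

def IsA1 {n : ℕ} (w : G n → ℝ) : Prop :=
  ∃ C : ℝ, ∀ (g : G n) (r : ℝ), 0 < r →
    wInt w (ball g r) / volume (ball g r)
      ≤ ENNReal.ofReal C * essInf (fun x => ENNReal.ofReal (w x)) (volume.restrict (ball g r))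

def IsAp {n : ℕ} (p : ℝ) (w : G n → ℝ) : Prop :=
  Measurable w ∧ (∀ x, 0 ≤ w x) ∧ (∀ (g : G n) (r : ℝ), 0 < r → wInt w (ball g r) < ⊤) ∧
    ((p = 1 ∧ IsA1 w) ∨ (1 < p ∧ IsApGt1 p w))

def morreyNormE {n : ℕ} (p κ : ℝ) (w : G n → ℝ) (F : G n → ℝ≥0∞) : ℝ≥0∞ :=
  ⨆ (g : G n) (r : ℝ) (_ : 0 < r),
    ((∫⁻ x in ball g r, (F x) ^ p * ENNReal.ofReal (w x)) / (wInt w (ball g r)) ^ κ) ^ (1/p)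

def morreyNorm {n : ℕ} (p κ : ℝ) (w f : G n → ℝ) : ℝ≥0∞ :=
  morreyNormE p κ w (fun x => ENNReal.ofReal |f x|)

def MemMorrey {n : ℕ} (p κ : ℝ) (w f : G n → ℝ) : Prop :=
  Measurable f ∧ morreyNorm p κ w f < ⊤

def lpwNorm {n : ℕ} (p : ℝ) (w f : G n → ℝ) : ℝ≥0∞ :=
  (∫⁻ g, (ENNReal.ofReal |f g|) ^ p * ENNReal.ofReal (w g)) ^ (1/p)

def lpwNormQ {n : ℕ} (p : ℝ) (w : G n → ℝ) (f : G n → Quaternion ℝ) : ℝ≥0∞ :=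
  (∫⁻ g, (ENNReal.ofReal ‖f g‖) ^ p * ENNReal.ofReal (w g)) ^ (1/p)

def dre (F : Quaternion ℝ → Quaternion ℝ) (σ : Quaternion ℝ) : Quaternion ℝ :=
  deriv (fun s : ℝ => F (σ + (s : Quaternion ℝ))) 0

def sker (m : ℕ) (c : ℝ) (σ : Quaternion ℝ) : Quaternion ℝ :=
  c • (dre^[m] (fun τ => ((Quaternion.normSq τ) ^ 2)⁻¹ • star τ)) σ

def toQ {n : ℕ} (g : G n) : Quaternion ℝ := ⟨∑ i, (g.2 i)^2, g.1 0, g.1 1, g.1 2⟩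

def Kker {n : ℕ} (c : ℝ) (g : G n) : Quaternion ℝ := sker (2*(n-1)) c (toQ g)

def Kker2 {n : ℕ} (c : ℝ) (g h : G n) : Quaternion ℝ := Kker c (mul (inv h) g)

def commTendsto {n : ℕ} (c : ℝ) (b f : G n → ℝ) (g : G n) (L : Quaternion ℝ) : Prop :=
  Tendsto (fun ε : ℝ => ∫ h in {h : G n | ε < rho g h}, ((b g - b h) * f h) • Kker2 c g h)
    (nhdsWithin 0 (Set.Ioi 0)) (nhds L)

def commFun {n : ℕ} (c : ℝ) (b f : G n → ℝ) (g : G n) : Quaternion ℝ :=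
  limUnder (nhdsWithin (0:ℝ) (Set.Ioi 0))
    (fun ε : ℝ => ∫ h in {h : G n | ε < rho g h}, ((b g - b h) * f h) • Kker2 c g h)

def eT {n : ℕ} (α : Fin 3) : G n := (Pi.single α 1, 0)
def eY {n : ℕ} (i : Fin (4*(n-1))) : G n := (0, Pi.single i 1)

def pderiv {n : ℕ} (v : G n) (f : G n → ℝ) (g : G n) : ℝ :=
  deriv (fun s : ℝ => f (g + s • v)) 0

def Y {n : ℕ} (l : Fin (n-1)) (j : Fin 4) (f : G n → ℝ) (g : G n) : ℝ :=
  pderiv (eY (idx l j)) f g +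
    2 * ∑ α : Fin 3, (∑ k : Fin 4, bmat α k j * g.2 (idx l k)) * pderiv (eT α) f g

def gradHsup {n : ℕ} (b : G n → ℝ) : ℝ :=
  sSup {a : ℝ | ∃ (g : G n) (l : Fin (n-1)) (j : Fin 4), a = |Y l j b g|}

def maxFunE {n : ℕ} (f : G n → ℝ) (g : G n) : ℝ≥0∞ :=
  ⨆ (g0 : G n) (r : ℝ) (_ : 0 < r) (_ : g ∈ ball g0 r),
    (∫⁻ x in ball g0 r, ENNReal.ofReal |f x|) / volume (ball g0 r)

def Ceta {n : ℕ} (c : ℝ) (φ : ℝ → ℝ) (η : ℝ) (f : G n → ℝ) (g : G n) : Quaternion ℝ :=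
  ∫ h, (φ (rho g h / η) * f h) • Kker2 c g h

def commEta {n : ℕ} (c : ℝ) (φ : ℝ → ℝ) (η : ℝ) (b f : G n → ℝ) (g : G n) : Quaternion ℝ :=
  ∫ h, ((b g - b h) * (φ (rho g h / η) * f h)) • Kker2 c g h

def CstarE {n : ℕ} (c : ℝ) (φ : ℝ → ℝ) (f : G n → ℝ) (g : G n) : ℝ≥0∞ :=
  ⨆ (η : ℝ) (_ : 0 < η), ENNReal.ofReal ‖Ceta c φ η f g‖

def IsCompactComm {n : ℕ} (c p κ : ℝ) (w b : G n → ℝ) : Prop :=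
  ∀ F : Set (G n → ℝ), (∀ f ∈ F, MemMorrey p κ w f) →
    (∃ M : ℝ, ∀ f ∈ F, morreyNorm p κ w f ≤ ENNReal.ofReal M) →
    ∀ ε : ℝ, 0 < ε → ∃ T : Set (G n → Quaternion ℝ), T.Finite ∧
      ∀ f ∈ F, ∃ t ∈ T,
        morreyNormE p κ w (fun g => ENNReal.ofReal ‖commFun c b f g - t g‖) < ENNReal.ofReal ε

end QHeis

namespace QHeis

/-! ### The group law and the homogeneous norm -/

/-- The bilinear map `y, y' ↦ Im⟨y, y'⟩` in the coordinates of the group law. -/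
def im {n : ℕ} (x y : Fin (4*(n-1)) → ℝ) : Fin 3 → ℝ := fun α =>
  ∑ l : Fin (n-1), ∑ k : Fin 4, ∑ j : Fin 4, bmat α k j * x (idx l k) * y (idx l j)

lemma mul_eq {n : ℕ} (a b : G n) :
    mul a b = (a.1 + b.1 + (2:ℝ) • im a.2 b.2, a.2 + b.2) := rfl

lemma im_add_left {n : ℕ} (x x' y : Fin (4*(n-1)) → ℝ) : im (x + x') y = im x y + im x' y := by
  funext α
  simp only [im, Pi.add_apply, ← Finset.sum_add_distrib]
  refine Finset.sum_congr rfl fun l _ => Finset.sum_congr rfl fun k _ =>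
    Finset.sum_congr rfl fun j _ => by ring

lemma im_add_right {n : ℕ} (x y y' : Fin (4*(n-1)) → ℝ) : im x (y + y') = im x y + im x y' := by
  funext α
  simp only [im, Pi.add_apply, ← Finset.sum_add_distrib]
  refine Finset.sum_congr rfl fun l _ => Finset.sum_congr rfl fun k _ =>
    Finset.sum_congr rfl fun j _ => by ring

lemma im_smul_left {n : ℕ} (s : ℝ) (x y : Fin (4*(n-1)) → ℝ) : im (s • x) y = s • im x y := by
  funext α
  simp only [im, Pi.smul_apply, smul_eq_mul, Finset.mul_sum]
  refine Finset.sum_congr rfl fun l _ => Finset.sum_congr rfl fun k _ =>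
    Finset.sum_congr rfl fun j _ => by ring

lemma im_smul_right {n : ℕ} (s : ℝ) (x y : Fin (4*(n-1)) → ℝ) : im x (s • y) = s • im x y := by
  funext α
  simp only [im, Pi.smul_apply, smul_eq_mul, Finset.mul_sum]
  refine Finset.sum_congr rfl fun l _ => Finset.sum_congr rfl fun k _ =>
    Finset.sum_congr rfl fun j _ => by ring

lemma im_neg_left {n : ℕ} (x y : Fin (4*(n-1)) → ℝ) : im (-x) y = - im x y := by
  simpa using im_smul_left (-1) x y

lemma im_neg_right {n : ℕ} (x y : Fin (4*(n-1)) → ℝ) : im x (-y) = - im x y := by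
  simpa using im_smul_right (-1) x y

lemma im_self {n : ℕ} (x : Fin (4*(n-1)) → ℝ) : im x x = 0 := by
  funext α
  refine Finset.sum_eq_zero fun l _ => ?_
  fin_cases α <;> simp [bmat, Fin.sum_univ_four] <;> ring

lemma im_swap {n : ℕ} (x y : Fin (4*(n-1)) → ℝ) : im y x = - im x y := by
  have h : im (x + y) (x + y) = im y x + im x y := by
    rw [im_add_left, im_add_right, im_add_right, im_self, im_self]; abel
  rw [eq_neg_iff_add_eq_zero, ← h, im_self]

lemma im_zero_left {n : ℕ} (y : Fin (4*(n-1)) → ℝ) : im 0 y = 0 := by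
  simpa using im_smul_left 0 0 y

lemma im_zero_right {n : ℕ} (x : Fin (4*(n-1)) → ℝ) : im x 0 = 0 := by
  simpa using im_smul_right 0 x 0

lemma idx_inj {n : ℕ} {l l' : Fin (n-1)} {k k' : Fin 4} :
    idx l k = idx l' k' ↔ l = l' ∧ k = k' := by
  have h1 := k.2
  have h2 := k'.2
  simp only [idx, Fin.ext_iff]
  omega

lemma idx_surj {n : ℕ} (i : Fin (4*(n-1))) : ∃ l : Fin (n-1), ∃ k : Fin 4, i = idx l k := by
  have h := i.2
  refine ⟨⟨i.1 / 4, by omega⟩, ⟨i.1 % 4, by omega⟩, ?_⟩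
  simp only [idx, Fin.ext_iff]
  omega

/-- The first quaternionic unit pairs with the `α`-th imaginary unit to give exactly the `α`-th
central direction. -/
lemma im_single {n : ℕ} (l : Fin (n-1)) (α : Fin 3) :
    im (Pi.single (idx l 0) (1:ℝ)) (Pi.single (idx l α.succ) (1:ℝ)) = Pi.single α 1 := by
  funext β
  simp only [im, Pi.single_apply, idx_inj]
  rw [Finset.sum_eq_single l]
  · fin_cases α <;> fin_cases β <;> simp [bmat]
  · intro l' _ h; simp [h]
  · simp

lemma mul_inv_mul {n : ℕ} (h g : G n) : mul h (mul (inv h) g) = g := by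
  simp only [mul_eq, inv, im_add_right, im_neg_left, im_neg_right, im_self]
  ext i
  · simp; ring
  · simp

/-- `(h⁻¹ g)⁻¹ = g⁻¹ h`, as Euclidean negation. -/
lemma inv_mul_swap {n : ℕ} (h g : G n) : mul (inv h) g = - mul (inv g) h := by
  simp only [mul_eq, inv, im_neg_left, im_swap g.2 h.2]
  ext i
  · simp; ring
  · simp

lemma hnorm_nonneg {n : ℕ} (g : G n) : 0 ≤ hnorm g := by unfold hnorm; positivity

lemma hnorm_pow {n : ℕ} (g : G n) :
    hnorm g ^ 4 = (∑ i, (g.2 i)^2)^2 + ∑ α, (g.1 α)^2 := by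
  unfold hnorm
  rw [← Real.rpow_natCast, ← Real.rpow_mul (by positivity)]
  norm_num

lemma hnorm_neg {n : ℕ} (g : G n) : hnorm (-g) = hnorm g := by simp [hnorm]

lemma rho_symm {n : ℕ} (h g : G n) : rho h g = rho g h := by
  simp only [rho]; rw [inv_mul_swap, hnorm_neg]

lemma abs_snd_le {n : ℕ} (g : G n) (i) : |g.2 i| ≤ hnorm g := by
  refine le_of_pow_le_pow_left₀ (n := 4) (by norm_num) (hnorm_nonneg g) ?_
  rw [hnorm_pow]
  have h1 : (g.2 i)^2 ≤ ∑ i, (g.2 i)^2 :=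
    Finset.single_le_sum (f := fun i => (g.2 i)^2) (fun i _ => sq_nonneg _) (Finset.mem_univ i)
  have h2 : 0 ≤ ∑ α, (g.1 α)^2 := Finset.sum_nonneg fun i _ => sq_nonneg _
  have h3 : |g.2 i|^4 = ((g.2 i)^2)^2 := by rw [← sq_abs (g.2 i)]; ring
  rw [h3]
  have := pow_le_pow_left₀ (sq_nonneg _) h1 2
  linarith

lemma abs_fst_le {n : ℕ} (g : G n) (α) : |g.1 α| ≤ hnorm g ^ 2 := by
  refine le_of_pow_le_pow_left₀ (n := 2) (by norm_num) (by positivity) ?_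
  rw [← pow_mul, hnorm_pow, sq_abs]
  have h1 : (g.1 α)^2 ≤ ∑ i, (g.1 i)^2 :=
    Finset.single_le_sum (f := fun i => (g.1 i)^2) (fun i _ => sq_nonneg _) (Finset.mem_univ α)
  have : 0 ≤ (∑ i, (g.2 i)^2)^2 := by positivity
  linarith

lemma continuous_rho {n : ℕ} (g : G n) : Continuous fun h => rho h g := by
  unfold rho hnorm mul
  refine Continuous.rpow_const ?_ (fun _ => Or.inr (by norm_num))
  fun_prop

lemma continuous_invmul {n : ℕ} (g : G n) : Continuous fun h => mul (inv h) g := by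
  unfold mul inv
  fun_prop

/-! ### Lipschitz bound by the horizontal gradient -/

/-- The left-invariant vector field `Y l j` at `p`, as a tangent vector. -/
def yvec {n : ℕ} (l : Fin (n-1)) (j : Fin 4) (p : G n) : G n :=
  (fun α => 2 * ∑ k : Fin 4, bmat α k j * p.2 (idx l k), Pi.single (idx l j) 1)

lemma pderiv_eq {n : ℕ} {b : G n → ℝ} (hb : Differentiable ℝ b) (v p : G n) :
    pderiv v b p = fderiv ℝ b p v := by
  have h := (hb (p + (0:ℝ) • v)).hasFDerivAt.comp_hasDerivAt (0:ℝ)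
    (((hasDerivAt_id (0:ℝ)).smul_const v).const_add p)
  simp only [zero_smul, add_zero, id, one_smul] at h
  exact h.deriv

lemma Y_eq {n : ℕ} {b : G n → ℝ} (hb : Differentiable ℝ b) (l : Fin (n-1)) (j : Fin 4) (p : G n) :
    Y l j b p = fderiv ℝ b p (yvec l j p) := by
  have : yvec l j p = eY (idx l j) +
      (2:ℝ) • ∑ α : Fin 3, (∑ k : Fin 4, bmat α k j * p.2 (idx l k)) • eT α := by
    ext i
    · simp [yvec, eY, eT, Prod.fst_sum, Finset.sum_apply, Pi.single_apply]
    · simp [yvec, eY, eT, Prod.snd_sum]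
  rw [this]
  simp only [Y, pderiv_eq hb, map_add, map_smul, map_sum, smul_eq_mul]

lemma sum_yvec {n : ℕ} (p : G n) (v : Fin (4*(n-1)) → ℝ) :
    ((2:ℝ) • im p.2 v, v) = ∑ l : Fin (n-1), ∑ j : Fin 4, v (idx l j) • yvec l j p := by
  ext i
  · simp only [im, yvec, Prod.fst_sum, Finset.sum_apply, Pi.smul_apply, Prod.smul_fst, smul_eq_mul,
      Finset.mul_sum]
    refine Finset.sum_congr rfl fun l _ => ?_
    rw [Finset.sum_comm]
    refine Finset.sum_congr rfl fun k _ => Finset.sum_congr rfl fun j _ => by ring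
  · obtain ⟨l, j, rfl⟩ := idx_surj i
    simp only [yvec, Prod.snd_sum, Finset.sum_apply, Pi.smul_apply, Prod.smul_snd, smul_eq_mul,
      Pi.single_apply, idx_inj]
    rw [Finset.sum_eq_single l]
    · simp
    · intro l' _ h; simp [h.symm]
    · simp

/-- The set whose supremum is `gradHsup b` is bounded above, so the supremum is not a junk value:
`∇_H b` is continuous with compact support. -/
lemma abs_Y_le {n : ℕ} {b : G n → ℝ} (hb : ContDiff ℝ (⊤ : ℕ∞) b) (hc : HasCompactSupport b)
    (l : Fin (n-1)) (j : Fin 4) (p : G n) : |Y l j b p| ≤ gradHsup b := by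
  have hd : Differentiable ℝ b := hb.differentiable (by simp)
  have hcont : ∀ l j, Continuous fun p => fderiv ℝ b p (yvec l j p) := by
    intro l j
    have h1 : Continuous fun p : G n => yvec l j p := by unfold yvec; fun_prop
    exact (hb.continuous_fderiv (by simp)).clm_apply h1
  have hsupp : ∀ l j, HasCompactSupport fun p => fderiv ℝ b p (yvec l j p) := by
    intro l j
    refine (hc.fderiv (𝕜 := ℝ)).mono ?_
    intro p hp h0
    exact hp (by simp [h0])
  choose C hC using fun q : Fin (n-1) × Fin 4 =>
    (hcont q.1 q.2).bounded_above_of_compact_support (hsupp q.1 q.2)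
  obtain ⟨M, hM⟩ := Finite.exists_le C
  refine le_csSup ⟨M, ?_⟩ ⟨p, l, j, rfl⟩
  rintro a ⟨p, l, j, rfl⟩
  rw [Y_eq hd]
  exact (hC (l, j) p).trans (hM (l, j))

lemma gradHsup_nonneg {n : ℕ} (b : G n → ℝ) : 0 ≤ gradHsup b :=
  Real.sSup_nonneg (by rintro a ⟨p, l, j, rfl⟩; exact abs_nonneg _)

/-- The curve `s ↦ p · (0, s v)` is the Euclidean segment from `p` in the direction
`(2 Im⟨y, v⟩, v)`, which is horizontal at each of its points because `Im⟨v, v⟩ = 0`. -/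
lemma horizontal_step {n : ℕ} {b : G n → ℝ} (hb : Differentiable ℝ b) {M : ℝ}
    (hM : ∀ l j p, |Y l j b p| ≤ M) (p : G n) (v : Fin (4*(n-1)) → ℝ) :
    |b (mul p (0, v)) - b p| ≤ (∑ l : Fin (n-1), ∑ j : Fin 4, |v (idx l j)|) * M := by
  set w : G n := ((2:ℝ) • im p.2 v, v) with hw
  have hend : mul p (0, v) = p + (1:ℝ) • w := by
    rw [mul_eq]; ext i <;> simp [hw]
  have hder : ∀ s : ℝ, HasDerivAt (fun s : ℝ => b (p + s • w)) (fderiv ℝ b (p + s • w) w) s := by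
    intro s
    have h := (hb (p + s • w)).hasFDerivAt.comp_hasDerivAt s
      (((hasDerivAt_id s).smul_const w).const_add p)
    simp only [id, one_smul] at h
    exact h
  have hbd : ∀ s : ℝ, ‖fderiv ℝ b (p + s • w) w‖
      ≤ (∑ l : Fin (n-1), ∑ j : Fin 4, |v (idx l j)|) * M := by
    intro s
    have h1 : w = ∑ l : Fin (n-1), ∑ j : Fin 4, v (idx l j) • yvec l j (p + s • w) := by
      rw [← sum_yvec]
      simp [hw, im_add_left, im_smul_left, im_self]
    have h2 : fderiv ℝ b (p + s • w) w
        = ∑ l : Fin (n-1), ∑ j : Fin 4, v (idx l j) * Y l j b (p + s • w) := by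
      simp only [Y_eq hb]
      generalize fderiv ℝ b (p + s • w) = T at *
      generalize p + s • w = q at *
      rw [h1]
      simp only [map_sum, map_smul, smul_eq_mul]
    rw [h2, Finset.sum_mul]
    refine (norm_sum_le _ _).trans (Finset.sum_le_sum fun l _ => ?_)
    rw [Finset.sum_mul]
    refine (norm_sum_le _ _).trans (Finset.sum_le_sum fun j _ => ?_)
    rw [Real.norm_eq_abs, abs_mul]
    exact mul_le_mul_of_nonneg_left (hM _ _ _) (abs_nonneg _)
  have := Convex.norm_image_sub_le_of_norm_hasDerivWithin_le (s := Set.univ) (x := (0:ℝ)) (y := 1)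
    (fun s _ => (hder s).hasDerivWithinAt) (fun s _ => hbd s) convex_univ trivial trivial
  rw [hend]
  simpa using this

lemma single_step {n : ℕ} {b : G n → ℝ} (hb : Differentiable ℝ b) {M : ℝ}
    (hM : ∀ l j p, |Y l j b p| ≤ M) (p : G n) (l : Fin (n-1)) (j : Fin 4) (s : ℝ) :
    |b (mul p (0, s • Pi.single (idx l j) 1)) - b p| ≤ |s| * M := by
  refine (horizontal_step hb hM p _).trans_eq ?_
  congr 1
  simp only [Pi.smul_apply, Pi.single_apply, idx_inj, smul_eq_mul]
  rw [Finset.sum_eq_single l]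
  · rw [Finset.sum_eq_single j]
    · simp
    · intro j' _ h; simp [h]
    · simp
  · intro l' _ h; simp [h]
  · simp

/-- A central displacement by `4 s u` is the group commutator of two horizontal displacements of
lengths `|s|` and `|u|`. -/
lemma central_step {n : ℕ} (hn : 2 ≤ n) {b : G n → ℝ} (hb : Differentiable ℝ b) {M : ℝ}
    (hM : ∀ l j p, |Y l j b p| ≤ M) (p : G n) (α : Fin 3) (s u : ℝ) :
    |b (p + (4 * s * u) • eT α) - b p| ≤ 2 * (|s| + |u|) * M := by
  let l : Fin (n-1) := ⟨0, by omega⟩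
  have h1 := single_step hb hM p l 0 s
  have h2 := single_step hb hM (mul p (0, s • Pi.single (idx l 0) 1)) l α.succ u
  have h3 := single_step hb hM (mul (mul p (0, s • Pi.single (idx l 0) 1))
    (0, u • Pi.single (idx l α.succ) 1)) l 0 (-s)
  have h4 := single_step hb hM (mul (mul (mul p (0, s • Pi.single (idx l 0) 1))
    (0, u • Pi.single (idx l α.succ) 1)) (0, (-s) • Pi.single (idx l 0) 1)) l α.succ (-u)
  have he : mul (mul (mul (mul p (0, s • Pi.single (idx l 0) 1))
    (0, u • Pi.single (idx l α.succ) 1)) (0, (-s) • Pi.single (idx l 0) 1))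
    (0, (-u) • Pi.single (idx l α.succ) 1) = p + (4 * s * u) • eT α := by
    simp only [mul_eq, im_add_left, im_smul_left, im_smul_right, im_self, im_single,
      im_swap (Pi.single (idx l 0) 1) (Pi.single (idx l α.succ) (1:ℝ)), eT]
    ext i
    · simp; ring
    · simp; ring
  rw [he] at h4
  rw [abs_neg] at h3 h4
  rw [abs_le] at *
  constructor <;> linarith [h1.1, h1.2, h2.1, h2.2, h3.1, h3.2, h4.1, h4.2]

lemma central_step_sqrt {n : ℕ} (hn : 2 ≤ n) {b : G n → ℝ} (hb : Differentiable ℝ b) {M : ℝ}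
    (hM : ∀ l j p, |Y l j b p| ≤ M) (p : G n) (α : Fin 3) {τ r : ℝ} (hr : 0 ≤ r)
    (h : |τ| ≤ r ^ 2) :
    |b (p + τ • eT α) - b p| ≤ 2 * r * M := by
  have hM0 : 0 ≤ M := (abs_nonneg _).trans (hM ⟨0, by omega⟩ 0 p)
  have h1 := central_step hn hb hM p α (√|τ| / 2) (SignType.sign τ * (√|τ| / 2))
  have h2 : 4 * (√|τ| / 2) * (SignType.sign τ * (√|τ| / 2)) = τ := by
    have := Real.mul_self_sqrt (abs_nonneg τ)
    calc _ = SignType.sign τ * (√|τ| * √|τ|) := by ring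
      _ = τ := by rw [this]; exact sign_mul_abs τ
  rw [h2] at h1
  have h3 : √|τ| ≤ r := Real.sqrt_le_iff.2 ⟨hr, h⟩
  have h4 : |(SignType.sign τ : ℝ) * (√|τ| / 2)| ≤ r / 2 := by
    rw [abs_mul, abs_of_nonneg (by positivity : 0 ≤ √|τ| / 2)]
    have : |(SignType.sign τ : ℝ)| ≤ 1 := by
      rcases lt_trichotomy τ 0 with h | h | h <;> simp [h]
    have h5 : 0 ≤ √|τ| := by positivity
    nlinarith
  have h6 : |√|τ| / 2| ≤ r / 2 := by
    rw [abs_of_nonneg (by positivity)]; linarith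
  refine h1.trans (mul_le_mul_of_nonneg_right ?_ hM0)
  linarith

lemma lipschitz {n : ℕ} (hn : 2 ≤ n) {b : G n → ℝ} (hb : Differentiable ℝ b) {M : ℝ}
    (hM : ∀ l j p, |Y l j b p| ≤ M) (g h : G n) :
    |b g - b h| ≤ (4 * n + 6) * rho g h * M := by
  have hM0 : 0 ≤ M := (abs_nonneg _).trans (hM ⟨0, by omega⟩ 0 g)
  obtain ⟨u, hu⟩ : ∃ u, u = mul (inv h) g := ⟨_, rfl⟩
  have hg : g = mul h u := by rw [hu, mul_inv_mul]
  have hr : rho g h = hnorm u := by rw [hu, rho]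
  rw [hr]
  have hr0 := hnorm_nonneg u
  have h0 := horizontal_step hb hM h u.2
  have hs : (∑ l : Fin (n-1), ∑ j : Fin 4, |u.2 (idx l j)|) ≤ 4 * n * hnorm u := by
    calc _ ≤ ∑ l : Fin (n-1), ∑ j : Fin 4, hnorm u :=
          Finset.sum_le_sum fun l _ => Finset.sum_le_sum fun j _ => abs_snd_le u _
      _ = ((n-1 : ℕ) : ℝ) * (4 * hnorm u) := by simp
      _ ≤ n * (4 * hnorm u) := by
          gcongr
          omega
      _ = _ := by ring
  have h0' := h0.trans (mul_le_mul_of_nonneg_right hs hM0)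
  have h1 := central_step_sqrt hn hb hM (mul h (0, u.2)) 0 hr0 (abs_fst_le u 0)
  have h2 := central_step_sqrt hn hb hM (mul h (0, u.2) + u.1 0 • eT 0) 1 hr0 (abs_fst_le u 1)
  have h3 := central_step_sqrt hn hb hM (mul h (0, u.2) + u.1 0 • eT 0 + u.1 1 • eT 1) 2 hr0
    (abs_fst_le u 2)
  have he : mul h (0, u.2) + u.1 0 • eT 0 + u.1 1 • eT 1 + u.1 2 • eT 2 = g := by
    rw [hg]
    simp only [mul_eq, eT]
    ext i
    · fin_cases i <;> simp <;> ring
    · simp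
  rw [he] at h3
  rw [abs_le] at *
  constructor <;> linarith [h1.1, h1.2, h2.1, h2.2, h3.1, h3.2, h0'.1, h0'.2]

end QHeis

namespace QHeis

/-! ### Size and continuity of the kernel -/

/-- Homogeneity of degree `-d` under positive dilations of `ℍ`. -/
def Homog (d : ℕ) (F : Quaternion ℝ → Quaternion ℝ) : Prop :=
  ∀ r : ℝ, 0 < r → ∀ σ, F (r • σ) = (r⁻¹) ^ d • F σ

lemma homog_dre {d : ℕ} {F : Quaternion ℝ → Quaternion ℝ} (hF : Homog d F) :
    Homog (d + 1) (dre F) := by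
  intro r hr σ
  have h : (fun s : ℝ => F (r • σ + (s : Quaternion ℝ)))
      = fun s : ℝ => (r⁻¹) ^ d • (fun s : ℝ => F (σ + (s : Quaternion ℝ))) (r⁻¹ * s) := by
    funext s
    rw [← hF r hr]
    congr 1
    rw [smul_add, ← Quaternion.coe_smul, smul_eq_mul, mul_inv_cancel_left₀ hr.ne']
  simp only [dre]
  rw [h, deriv_fun_const_smul_field,
    deriv_comp_mul_left r⁻¹ (fun s : ℝ => F (σ + (s : Quaternion ℝ)))]
  simp only [mul_zero, smul_smul, pow_succ]

lemma homog_iterate {d : ℕ} {F : Quaternion ℝ → Quaternion ℝ} (hF : Homog d F) (m : ℕ) :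
    Homog (d + m) (dre^[m] F) := by
  induction m with
  | zero => exact hF
  | succ m ih => rw [Function.iterate_succ_apply']; exact homog_dre ih

lemma contDiffOn_dre {F : Quaternion ℝ → Quaternion ℝ}
    (hF : ContDiffOn ℝ (⊤ : ℕ∞) F {0}ᶜ) : ContDiffOn ℝ (⊤ : ℕ∞) (dre F) {0}ᶜ := by
  have ho : IsOpen ({0}ᶜ : Set (Quaternion ℝ)) := isOpen_compl_singleton
  have h1 : ContDiffOn ℝ (⊤ : ℕ∞) (fun σ => fderiv ℝ F σ 1) {0}ᶜ :=
    (hF.fderiv_of_isOpen ho (by simp)).clm_apply contDiffOn_const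
  refine h1.congr fun σ hσ => ?_
  have hd : DifferentiableAt ℝ F (σ + (0:ℝ) • (1 : Quaternion ℝ)) := by
    simpa using (hF.differentiableOn (by simp)).differentiableAt (ho.mem_nhds hσ)
  have h := hd.hasFDerivAt.comp_hasDerivAt (0:ℝ)
    (((hasDerivAt_id (0:ℝ)).smul_const (1 : Quaternion ℝ)).const_add σ)
  have h2 : (fun s : ℝ => F (σ + (s : Quaternion ℝ)))
      = F ∘ fun s : ℝ => σ + id s • (1 : Quaternion ℝ) := by
    funext s
    simp [Algebra.smul_def]
  rw [dre, h2, h.deriv]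
  simp

lemma contDiffOn_iterate {F : Quaternion ℝ → Quaternion ℝ}
    (hF : ContDiffOn ℝ (⊤ : ℕ∞) F {0}ᶜ) (m : ℕ) :
    ContDiffOn ℝ (⊤ : ℕ∞) (dre^[m] F) {0}ᶜ := by
  induction m with
  | zero => exact hF
  | succ m ih => rw [Function.iterate_succ_apply']; exact contDiffOn_dre ih

lemma homog_base : Homog 3 fun τ => ((Quaternion.normSq τ) ^ 2)⁻¹ • star τ := by
  intro r hr σ
  simp only [Quaternion.normSq_smul, Quaternion.star_smul, smul_smul]
  congr 1
  field_simp

lemma contDiffOn_base : ContDiffOn ℝ (⊤ : ℕ∞)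
    (fun τ : Quaternion ℝ => ((Quaternion.normSq τ) ^ 2)⁻¹ • star τ) {0}ᶜ := by
  have h1 : ContDiff ℝ (⊤ : ℕ∞) fun τ : Quaternion ℝ => Quaternion.normSq τ := by
    simp only [Quaternion.normSq_eq_norm_mul_self, ← sq]
    exact contDiff_norm_sq ℝ
  have h2 : ContDiff ℝ (⊤ : ℕ∞) fun τ : Quaternion ℝ => star τ :=
    (LinearMap.toContinuousLinearMap
      { toFun := fun τ : Quaternion ℝ => star τ
        map_add' := star_add
        map_smul' := fun r τ => Quaternion.star_smul r τ }).contDiff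
  refine ContDiffOn.smul (ContDiffOn.inv (h1.pow 2).contDiffOn ?_) h2.contDiffOn
  intro τ hτ
  simpa using hτ

lemma sker_continuousOn (m : ℕ) (c : ℝ) : ContinuousOn (sker m c) {0}ᶜ := by
  unfold sker
  exact (contDiffOn_iterate contDiffOn_base m).continuousOn.const_smul c

/-- By homogeneity, the bound on the unit sphere propagates to `ℍ ∖ {0}`. -/
lemma sker_bound (m : ℕ) (c : ℝ) :
    ∃ A : ℝ, 0 < A ∧ ∀ σ : Quaternion ℝ, σ ≠ 0 → ‖sker m c σ‖ ≤ A * (‖σ‖⁻¹) ^ (3 + m) := by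
  have hcont : ContinuousOn (sker m c) (Metric.sphere 0 1) :=
    (sker_continuousOn m c).mono fun σ hσ h0 => by
      rw [Set.mem_singleton_iff.1 h0] at hσ; simp at hσ
  obtain ⟨A, hA⟩ := (isCompact_sphere (0 : Quaternion ℝ) 1).exists_bound_of_continuousOn hcont
  have hom : Homog (3 + m) (sker m c) := by
    intro r hr σ
    simp only [sker]
    rw [homog_iterate homog_base m r hr, smul_comm]
  refine ⟨max A 1, by positivity, fun σ hσ => ?_⟩
  have hpos : 0 < ‖σ‖ := norm_pos_iff.2 hσ
  have hs : σ = ‖σ‖ • (‖σ‖⁻¹ • σ) := by rw [smul_smul, mul_inv_cancel₀ hpos.ne', one_smul]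
  have h1 := hA (‖σ‖⁻¹ • σ) (by simp [norm_smul, hpos.ne'])
  conv_lhs => rw [hs, hom _ hpos, norm_smul]
  rw [Real.norm_of_nonneg (by positivity), mul_comm]
  exact mul_le_mul_of_nonneg_right (h1.trans (le_max_left _ _)) (by positivity)

lemma norm_toQ {n : ℕ} (g : G n) : ‖toQ g‖ = hnorm g ^ 2 := by
  refine (pow_left_inj₀ (norm_nonneg _) (sq_nonneg _) two_ne_zero).1 ?_
  rw [← pow_mul, hnorm_pow, sq, ← Quaternion.normSq_eq_norm_mul_self, Quaternion.normSq_def',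
    Fin.sum_univ_three]
  simp only [toQ]
  ring

lemma continuous_toQ {n : ℕ} : Continuous (toQ : G n → Quaternion ℝ) := by
  have h : (toQ : G n → Quaternion ℝ) = fun g => Quaternion.linearIsometryEquivTuple.symm
      (!₂[∑ i, (g.2 i)^2, g.1 0, g.1 1, g.1 2]) := by
    funext g
    ext <;> simp [toQ]
  rw [h]
  refine (LinearIsometryEquiv.continuous _).comp ?_
  refine (PiLp.continuous_toLp 2 _).comp ?_
  refine continuous_pi fun i => ?_
  fin_cases i <;> simp <;> fun_prop

lemma Kker2_bound (n : ℕ) (hn : 2 ≤ n) (c : ℝ) :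
    ∃ A : ℝ, 0 < A ∧ ∀ g h : G n, 0 < rho g h →
      ‖Kker2 c g h‖ ≤ A * ((rho g h)⁻¹) ^ (4 * n + 2) := by
  obtain ⟨A, hA, h⟩ := sker_bound (2 * (n-1)) c
  refine ⟨A, hA, fun x y hxy => ?_⟩
  have h1 := h (toQ (mul (inv y) x)) (by
    rw [← norm_pos_iff, norm_toQ]
    exact pow_pos hxy 2)
  rw [norm_toQ, ← inv_pow, ← pow_mul] at h1
  rw [show 4 * n + 2 = 2 * (3 + 2 * (n-1)) by omega]
  exact h1

lemma Kker2_continuousOn {n : ℕ} (c : ℝ) (g : G n) :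
    ContinuousOn (fun h => Kker2 c g h) {h | 0 < rho g h} := by
  unfold Kker2 Kker
  refine (sker_continuousOn _ c).comp (continuous_toQ.comp (continuous_invmul g)).continuousOn ?_
  intro h hh h0
  have : ‖toQ (mul (inv h) g)‖ = 0 := by rw [norm_eq_zero]; exact h0
  rw [norm_toQ] at this
  exact (pow_pos hh 2).ne' this

/-! ### Volume of balls and the maximal function -/

lemma isOpen_ball {n : ℕ} (g : G n) (r : ℝ) : IsOpen (ball g r) :=
  isOpen_lt (continuous_rho g) continuous_const

/-- A ball lies in a left translate of a box of sides `2 r` (horizontal) and `2 r²` (central). -/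
lemma volume_ball_le {n : ℕ} (hn : 2 ≤ n) (g : G n) {r : ℝ} (hr : 0 < r) :
    volume (ball g r) ≤ ENNReal.ofReal (2 ^ (4 * n) * r ^ (4 * n + 2)) := by
  rw [Measure.volume_eq_prod, Measure.prod_apply_symm (isOpen_ball g r).measurableSet]
  -- each slice at fixed `y` lies in a cube of side `2 r²`, empty unless `y` is in a cube of side `2 r`
  have hsl : ∀ y : Fin (4*(n-1)) → ℝ,
      volume ((fun t : Fin 3 → ℝ => ((t, y) : G n)) ⁻¹' ball g r)
        ≤ (Metric.ball g.2 r).indicator (fun _ => ENNReal.ofReal ((2 * r^2) ^ 3)) y := by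
    intro y
    by_cases hy : y ∈ Metric.ball g.2 r
    · rw [Set.indicator_of_mem hy]
      have hv := Real.volume_pi_ball (g.1 + (2:ℝ) • im g.2 y) (r := r^2) (by positivity)
      rw [Fintype.card_fin] at hv
      rw [← hv]
      refine measure_mono fun t ht => ?_
      rw [Metric.mem_ball, dist_pi_lt_iff (by positivity)]
      intro α
      have h1 := abs_fst_le (mul (inv g) (t, y)) α
      have h2 : hnorm (mul (inv g) (t, y)) < r := ht
      have h3 := pow_lt_pow_left₀ h2 (hnorm_nonneg _) two_ne_zero
      refine lt_of_eq_of_lt ?_ (h1.trans_lt h3)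
      rw [Real.dist_eq]
      congr 1
      simp [mul_eq, inv, im_neg_left]
      ring
    · rw [Set.indicator_of_notMem hy, nonpos_iff_eq_zero]
      convert measure_empty (μ := (volume : Measure (Fin 3 → ℝ)))
      refine Set.eq_empty_of_forall_notMem fun t ht => hy ?_
      rw [Metric.mem_ball, dist_pi_lt_iff hr]
      intro i
      have h2 : hnorm (mul (inv g) (t, y)) < r := ht
      refine lt_of_eq_of_lt ?_ ((abs_snd_le (mul (inv g) (t, y)) i).trans_lt h2)
      rw [Real.dist_eq]
      congr 1
      simp [mul_eq, inv]
      ring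
  refine (lintegral_mono hsl).trans ?_
  rw [lintegral_indicator_const Metric.isOpen_ball.measurableSet, Real.volume_pi_ball _ hr,
    ← ENNReal.ofReal_mul (by positivity), Fintype.card_fin]
  apply ENNReal.ofReal_le_ofReal
  rw [mul_pow, mul_pow, show 4 * n + 2 = 6 + 4 * (n-1) by omega,
    show 4 * n = 4 + 4 * (n-1) by omega, pow_add, pow_add, ← pow_mul]
  have : 0 ≤ r ^ (2*3) * (2 ^ (4 * (n-1)) * r ^ (4 * (n-1))) := by positivity
  norm_num at this ⊢
  linarith

lemma lintegral_ball_le {n : ℕ} (hn : 2 ≤ n) (f : G n → ℝ) (g : G n) {r : ℝ} (hr : 0 < r) :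
    ∫⁻ x in ball g r, ENNReal.ofReal |f x|
      ≤ ENNReal.ofReal (2 ^ (4 * n) * r ^ (4 * n + 2)) * maxFunE f g := by
  have hg : g ∈ ball g r := by
    have h0 : mul (inv g) g = 0 := by
      simp only [mul_eq, inv, im_neg_left, im_self]
      ext i <;> simp
    show hnorm (mul (inv g) g) < r
    rw [h0]
    simpa [hnorm] using hr
  have h1 : (∫⁻ x in ball g r, ENNReal.ofReal |f x|) / volume (ball g r) ≤ maxFunE f g :=
    le_iSup_of_le g (le_iSup_of_le r (le_iSup_of_le hr (le_iSup_of_le hg le_rfl)))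
  have hv := volume_ball_le hn g hr
  have hpos : volume (ball g r) ≠ 0 := ((isOpen_ball g r).measure_pos _ ⟨g, hg⟩).ne'
  have hfin : volume (ball g r) ≠ ⊤ := (hv.trans_lt ENNReal.ofReal_lt_top).ne
  rw [ENNReal.div_le_iff hpos hfin] at h1
  exact h1.trans (by rw [mul_comm]; gcongr)

end QHeis

namespace QHeis

/-! ### Comparison of the two truncations -/

/-- The integral of the commutator kernel over a punctured ball, estimated by summing over dyadic
annuli `η 2^{-k-1} ≤ ρ(g, ·) < η 2^{-k}`: each contributes `O(η 2^{-k} M · Mf(g))`. -/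
lemma lintegral_near_le {n : ℕ} (hn : 2 ≤ n) {c A : ℝ} (hA : 0 < A)
    (hK : ∀ g h : G n, 0 < rho g h → ‖Kker2 c g h‖ ≤ A * ((rho g h)⁻¹) ^ (4 * n + 2))
    {b : G n → ℝ} {B M : ℝ} (hB : 0 ≤ B) (hM : 0 ≤ M)
    (hb : ∀ g h : G n, |b g - b h| ≤ B * rho g h * M) {η : ℝ} (hη : 0 < η)
    (f : G n → ℝ) (g : G n) :
    ∫⁻ h in {h | 0 < rho g h ∧ rho g h < η}, ‖((b g - b h) * f h) • Kker2 c g h‖ₑ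
      ≤ ENNReal.ofReal (2 ^ (8 * n + 3) * A * B * η * M) * maxFunE f g := by
  set S : ℕ → Set (G n) := fun k => {h | η * (1/2) ^ (k+1) ≤ rho g h ∧ rho g h < η * (1/2) ^ k}
  have hcont : Continuous fun h => rho g h := by
    simpa only [rho_symm g] using continuous_rho g
  have hSm : ∀ k, MeasurableSet (S k) := fun k =>
    (measurableSet_le measurable_const hcont.measurable).inter
      (measurableSet_lt hcont.measurable measurable_const)
  have hcover : {h | 0 < rho g h ∧ rho g h < η} ⊆ ⋃ k, S k := by
    rintro h ⟨h0, h1⟩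
    have hex : ∃ k : ℕ, η * (1/2) ^ (k+1) ≤ rho g h := by
      obtain ⟨k, hk⟩ := exists_pow_lt_of_lt_one (div_pos h0 hη) (by norm_num : (1/2 : ℝ) < 1)
      refine ⟨k, ?_⟩
      rw [lt_div_iff₀ hη] at hk
      have : 0 < (1/2 : ℝ) ^ k * η := by positivity
      rw [pow_succ]
      linarith
    classical
    refine Set.mem_iUnion.2 ⟨Nat.find hex, Nat.find_spec hex, ?_⟩
    rcases hk : Nat.find hex with _ | k
    · simpa using h1
    · exact not_le.1 (Nat.find_min hex (m := k) (by omega))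
  have hS : ∀ k, ∫⁻ h in S k, ‖((b g - b h) * f h) • Kker2 c g h‖ₑ
      ≤ ENNReal.ofReal (2 ^ (8 * n + 2) * A * B * η * M * (1/2) ^ k) * maxFunE f g := by
    intro k
    have hr : 0 < η * (1/2) ^ k := by positivity
    set r := η * (1/2) ^ k with hrdef
    have hpt : ∀ h ∈ S k, ‖((b g - b h) * f h) • Kker2 c g h‖ₑ
        ≤ ENNReal.ofReal (B * r * M * (A * (2 / r) ^ (4 * n + 2))) * ENNReal.ofReal |f h| := by
      rintro h ⟨h1, h2⟩
      have h1' : r / 2 ≤ rho g h := by rw [hrdef]; rw [pow_succ] at h1; linarith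
      have h0 : 0 < rho g h := by linarith [half_pos hr]
      rw [← ENNReal.ofReal_mul (by positivity), ← ofReal_norm]
      apply ENNReal.ofReal_le_ofReal
      rw [norm_smul, norm_mul, Real.norm_eq_abs, Real.norm_eq_abs]
      have e1 : |b g - b h| ≤ B * r * M := (hb g h).trans (by gcongr)
      have e2 : ‖Kker2 c g h‖ ≤ A * (2 / r) ^ (4 * n + 2) := by
        refine (hK g h h0).trans ?_
        have : (rho g h)⁻¹ ≤ 2 / r := by
          rw [show 2 / r = (r / 2)⁻¹ by rw [inv_div]]
          exact inv_anti₀ (half_pos hr) h1'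
        gcongr
      calc |b g - b h| * |f h| * ‖Kker2 c g h‖
          ≤ (B * r * M) * |f h| * (A * (2 / r) ^ (4 * n + 2)) := by gcongr
        _ = _ := by ring
    calc ∫⁻ h in S k, ‖((b g - b h) * f h) • Kker2 c g h‖ₑ
        ≤ ∫⁻ h in S k, ENNReal.ofReal (B * r * M * (A * (2 / r) ^ (4 * n + 2))) *
            ENNReal.ofReal |f h| := setLIntegral_mono' (hSm k) hpt
      _ = ENNReal.ofReal (B * r * M * (A * (2 / r) ^ (4 * n + 2))) *
            ∫⁻ h in S k, ENNReal.ofReal |f h| := lintegral_const_mul' _ _ ENNReal.ofReal_ne_top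
      _ ≤ ENNReal.ofReal (B * r * M * (A * (2 / r) ^ (4 * n + 2))) *
            (ENNReal.ofReal (2 ^ (4 * n) * r ^ (4 * n + 2)) * maxFunE f g) := by
          refine mul_le_mul_right ?_ _
          refine (lintegral_mono_set ?_).trans (lintegral_ball_le hn f g hr)
          rintro h ⟨_, h2⟩
          show rho h g < r
          rw [rho_symm]; exact h2
      _ = _ := by
          rw [← mul_assoc, ← ENNReal.ofReal_mul (by positivity)]
          congr 2
          rw [div_pow, show 8 * n + 2 = (4 * n + 2) + 4 * n by ring, pow_add 2 (4 * n + 2)]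
          have : r ^ (4 * n + 2) ≠ 0 := by positivity
          field_simp
          rw [hrdef]
          ring
  refine (lintegral_mono_set hcover).trans ((lintegral_iUnion_le _ _).trans ?_)
  refine (ENNReal.tsum_le_tsum hS).trans ?_
  rw [ENNReal.tsum_mul_right]
  refine mul_le_mul_left (le_of_eq ?_) _
  rw [← ENNReal.ofReal_tsum_of_nonneg (fun k => by positivity)
    ((summable_geometric_of_lt_one (by norm_num) (by norm_num)).mul_left _), tsum_mul_left (a := 2 ^ (8 * n + 2) * A * B * η * M),
    tsum_geometric_two, pow_succ 2 (8 * n + 2)]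
  congr 1
  ring

lemma aestronglyMeasurable_of_isLocInt {n : ℕ} {f : G n → ℝ} (hf : IsLocInt f) :
    AEStronglyMeasurable f volume := by
  have h : (⋃ k : ℕ, ball (0 : G n) (k + 1)) = Set.univ := by
    refine Set.eq_univ_of_forall fun x => ?_
    obtain ⟨k, hk⟩ := exists_nat_gt (rho x 0)
    exact Set.mem_iUnion.2 ⟨k, show rho x 0 < k + 1 by linarith⟩
  rw [← Measure.restrict_univ (μ := volume), ← h]
  exact AEStronglyMeasurable.iUnion fun k => (hf 0 (k + 1) (by positivity)).aestronglyMeasurable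

/-- The integrand of the commutator is integrable on every annulus around `g`. -/
lemma integrableOn_annulus {n : ℕ} {c A : ℝ} (hA : 0 < A)
    (hK : ∀ g h : G n, 0 < rho g h → ‖Kker2 c g h‖ ≤ A * ((rho g h)⁻¹) ^ (4 * n + 2))
    {b : G n → ℝ} {B M : ℝ} (hB : 0 ≤ B) (hM : 0 ≤ M) (hbc : Continuous b)
    (hb : ∀ g h : G n, |b g - b h| ≤ B * rho g h * M) {δ η : ℝ} (hδ : 0 < δ) (hη : 0 < η)
    {f : G n → ℝ} (hf : IsLocInt f) (g : G n) :
    IntegrableOn (fun h => ((b g - b h) * f h) • Kker2 c g h)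
      {h | δ < rho g h ∧ rho g h < η} := by
  have hcont : Continuous fun h => rho g h := by
    simpa only [rho_symm g] using continuous_rho g
  have hSm : MeasurableSet {h | δ < rho g h ∧ rho g h < η} :=
    (measurableSet_lt measurable_const hcont.measurable).inter
      (measurableSet_lt hcont.measurable measurable_const)
  have hfi : IntegrableOn f {h | δ < rho g h ∧ rho g h < η} :=
    (hf g η hη).mono_set fun h hh => show rho h g < η by rw [rho_symm]; exact hh.2
  refine Integrable.mono' (hfi.norm.const_mul (B * η * M * (A * (δ⁻¹) ^ (4 * n + 2)))) ?_ ?_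
  · have m1 : AEStronglyMeasurable (fun h => (b g - b h) * f h)
        (volume.restrict {h | δ < rho g h ∧ rho g h < η}) :=
      (continuous_const.sub hbc).aestronglyMeasurable.mul hfi.aestronglyMeasurable
    have m2 : AEStronglyMeasurable (fun h => Kker2 c g h)
        (volume.restrict {h | δ < rho g h ∧ rho g h < η}) :=
      ((Kker2_continuousOn c g).mono fun h hh => hδ.trans hh.1).aestronglyMeasurable hSm
    exact m1.smul m2
  · refine (ae_restrict_iff' hSm).2 (ae_of_all _ ?_)
    rintro h ⟨h1, h2⟩
    have h0 : 0 < rho g h := hδ.trans h1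
    rw [norm_smul, norm_mul, Real.norm_eq_abs]
    have e1 : |b g - b h| ≤ B * η * M := (hb g h).trans (by gcongr)
    have e2 : ‖Kker2 c g h‖ ≤ A * (δ⁻¹) ^ (4 * n + 2) := (hK g h h0).trans (by gcongr)
    calc |b g - b h| * ‖f h‖ * ‖Kker2 c g h‖
        ≤ (B * η * M) * ‖f h‖ * (A * (δ⁻¹) ^ (4 * n + 2)) := by gcongr
      _ = _ := by ring

/-- For `ε < η`, the smooth and the sharp truncation differ by at most the integral of the kernel
over the punctured ball of radius `η`. If the integrand fails to be integrable at infinity, both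
Bochner integrals take the value `0`; the difference of the integrands is always integrable. -/
lemma truncation_diff {n : ℕ} {c A : ℝ} (hA : 0 < A)
    (hK : ∀ g h : G n, 0 < rho g h → ‖Kker2 c g h‖ ≤ A * ((rho g h)⁻¹) ^ (4 * n + 2))
    {b : G n → ℝ} {B M : ℝ} (hB : 0 ≤ B) (hM : 0 ≤ M) (hbc : Continuous b)
    (hb : ∀ g h : G n, |b g - b h| ≤ B * rho g h * M) {η ε : ℝ} (hη : 0 < η) (hε : 0 < ε)
    (hεη : ε < η) {φ : ℝ → ℝ} (hφc : Continuous φ)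
    (hφ0 : ∀ t : ℝ, t ≤ 1/2 → φ t = 0) (hφ1 : ∀ t : ℝ, 1 ≤ t → φ t = 1)
    (hφr : ∀ t : ℝ, 0 ≤ φ t ∧ φ t ≤ 1)
    {f : G n → ℝ} (hf : IsLocInt f) (g : G n) :
    ENNReal.ofReal ‖commEta c φ η b f g -
        ∫ h in {h : G n | ε < rho g h}, ((b g - b h) * f h) • Kker2 c g h‖
      ≤ ∫⁻ h in {h | 0 < rho g h ∧ rho g h < η}, ‖((b g - b h) * f h) • Kker2 c g h‖ₑ := by
  have hcont : Continuous fun h => rho g h := by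
    simpa only [rho_symm g] using continuous_rho g
  set F : G n → Quaternion ℝ := fun h => ((b g - b h) * f h) • Kker2 c g h with hF
  set δ := min ε (η / 2) / 2 with hδdef
  have hmin : 0 < min ε (η / 2) := lt_min hε (half_pos hη)
  have hδ : 0 < δ := half_pos hmin
  have hδε : δ < ε := (half_lt_self hmin).trans_le (min_le_left _ _)
  have hδη : δ < η / 2 := (half_lt_self hmin).trans_le (min_le_right _ _)
  set T : Set (G n) := {h | δ < rho g h ∧ rho g h < η} with hT
  have hTm : MeasurableSet T := (measurableSet_lt measurable_const hcont.measurable).inter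
      (measurableSet_lt hcont.measurable measurable_const)
  have hUm : MeasurableSet {h : G n | ε < rho g h} :=
    measurableSet_lt measurable_const hcont.measurable
  have hPm : MeasurableSet {h | 0 < rho g h ∧ rho g h < η} :=
    (measurableSet_lt measurable_const hcont.measurable).inter
      (measurableSet_lt hcont.measurable measurable_const)
  have hFT : IntegrableOn F T := integrableOn_annulus hA hK hB hM hbc hb hδ hη hf g
  set E : G n → Quaternion ℝ := fun h => φ (rho g h / η) • F h with hE
  have hcomm : commEta c φ η b f g = ∫ h, E h := by
    simp only [commEta, hE, hF, smul_smul]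
    congr 1; funext h; congr 1; ring
  set I : G n → Quaternion ℝ := {h : G n | ε < rho g h}.indicator F with hI
  have hint : ∫ h in {h : G n | ε < rho g h}, F h = ∫ h, I h := (integral_indicator hUm).symm
  -- the difference of the integrands is a bounded multiple of `F`, supported in the annulus `T`
  set θ : G n → ℝ := fun h =>
    φ (rho g h / η) - {h : G n | ε < rho g h}.indicator (fun _ => (1:ℝ)) h with hθ
  have hEI : ∀ h, E h - I h = T.indicator (fun h => θ h • F h) h := by
    intro h
    have hI' : I h = ({h : G n | ε < rho g h}.indicator (fun _ => (1:ℝ)) h) • F h := by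
      by_cases hh : ε < rho g h
      · rw [hI, Set.indicator_of_mem (by exact hh), Set.indicator_of_mem (by exact hh), one_smul]
      · rw [hI, Set.indicator_of_notMem (by exact hh), Set.indicator_of_notMem (by exact hh),
          zero_smul]
    have h1 : E h - I h = θ h • F h := by rw [hI', hθ, sub_smul]
    rw [h1]
    by_cases hh : h ∈ T
    · rw [Set.indicator_of_mem hh]
    · rw [Set.indicator_of_notMem hh]
      have : θ h = 0 := by
        simp only [hT, Set.mem_ofPred_eq, not_and_or, not_lt] at hh
        rcases hh with hh | hh
        · have e1 : φ (rho g h / η) = 0 := hφ0 _ (by rw [div_le_iff₀ hη]; linarith)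
          rw [hθ]
          simp only [e1]
          rw [Set.indicator_of_notMem (by simp only [Set.mem_ofPred_eq]; linarith), sub_zero]
        · have e1 : φ (rho g h / η) = 1 := hφ1 _ (by rw [le_div_iff₀ hη]; linarith)
          rw [hθ]
          simp only [e1]
          rw [Set.indicator_of_mem (by simp only [Set.mem_ofPred_eq]; linarith), sub_self]
      rw [this, zero_smul]
  have hθ1 : ∀ h, ‖θ h‖ ≤ 1 := by
    intro h
    have h1 := hφr (rho g h / η)
    rw [hθ, Real.norm_eq_abs, abs_le]
    by_cases hh : h ∈ {h : G n | ε < rho g h}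
    · simp only [Set.indicator_of_mem hh]; constructor <;> linarith
    · simp only [Set.indicator_of_notMem hh]; constructor <;> linarith
  have hθm : AEStronglyMeasurable θ (volume.restrict T) := by
    refine (Continuous.aestronglyMeasurable (by fun_prop)).sub ?_
    exact (stronglyMeasurable_const.indicator hUm).aestronglyMeasurable
  have hD : Integrable fun h => E h - I h := by
    simp only [hEI]
    rw [integrable_indicator_iff hTm]
    exact hFT.bdd_smul 1 hθm (ae_of_all _ hθ1)
  have hle : ENNReal.ofReal ‖∫ h, (E h - I h)‖
      ≤ ∫⁻ h in {h | 0 < rho g h ∧ rho g h < η}, ‖F h‖ₑ := by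
    rw [ofReal_norm]
    refine (enorm_integral_le_lintegral_enorm _).trans ?_
    rw [← lintegral_indicator hPm]
    refine lintegral_mono fun h => ?_
    simp only [hEI]
    by_cases hh : h ∈ T
    · rw [Set.indicator_of_mem hh, Set.indicator_of_mem (by exact ⟨hδ.trans hh.1, hh.2⟩), enorm_smul]
      refine mul_le_of_le_one_left' ?_
      rw [← ofReal_norm]
      exact ENNReal.ofReal_le_one.2 (hθ1 h)
    · rw [Set.indicator_of_notMem hh]; simp
  rw [hcomm, hint]
  by_cases hEi : Integrable E
  · have hIi : Integrable I := by
      have := hEi.sub hD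
      refine this.congr (ae_of_all _ fun h => ?_)
      simp
    rwa [← integral_sub hEi hIi]
  · have hIi : ¬ Integrable I := fun h => hEi (by
      refine (hD.add h).congr (ae_of_all _ fun x => ?_)
      simp)
    rw [integral_undef hEi, integral_undef hIi]
    simp

end QHeis

open QHeis MeasureTheory in
/-- there is `C > 0` such that for every `b ∈ C_c^∞(𝓗^{n-1})`, every
`η > 0`, every `f ∈ L¹_loc(𝓗^{n-1})` and every `g`, whenever the principal value
`[b,𝒞]f(g)` exists (with value `L`),
`|[b,𝒞_η]f(g) − [b,𝒞]f(g)| ≤ C η ‖∇_H b‖_∞ · Mf(g)`. -/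
theorem smooth_truncation_approximates_commutator (n : ℕ) (hn : 2 ≤ n)
    (c : ℝ) (hc : c ≠ 0)
    (φ : ℝ → ℝ) (hφs : ContDiff ℝ (⊤ : ℕ∞) φ)
    (hφ0 : ∀ t : ℝ, t ≤ 1/2 → φ t = 0) (hφ1 : ∀ t : ℝ, 1 ≤ t → φ t = 1)
    (hφr : ∀ t : ℝ, 0 ≤ φ t ∧ φ t ≤ 1) :
    ∃ C : ℝ, 0 < C ∧
      ∀ b : G n → ℝ, ContDiff ℝ (⊤ : ℕ∞) b → HasCompactSupport b →
      ∀ η : ℝ, 0 < η → ∀ f : G n → ℝ, IsLocInt f →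
      ∀ (g : G n) (L : Quaternion ℝ), commTendsto c b f g L →
        ENNReal.ofReal ‖commEta c φ η b f g - L‖
          ≤ ENNReal.ofReal (C * η * gradHsup b) * maxFunE f g := by

  obtain ⟨A, hA, hK⟩ := Kker2_bound n hn c
  refine ⟨2 ^ (8 * n + 3) * A * (4 * n + 6), by positivity, ?_⟩
  intro b hb hbc η hη f hf g L hL
  have hM := gradHsup_nonneg b
  have hlip : ∀ g h : G n, |b g - b h| ≤ (4 * n + 6) * rho g h * gradHsup b :=
    lipschitz hn (hb.differentiable (by simp)) (abs_Y_le hb hbc)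
  have hnear := lintegral_near_le hn hA hK (by positivity) hM hlip hη f g
  have hlim : Filter.Tendsto (fun ε : ℝ => ENNReal.ofReal ‖commEta c φ η b f g -
      ∫ h in {h : G n | ε < rho g h}, ((b g - b h) * f h) • Kker2 c g h‖)
      (nhdsWithin 0 (Set.Ioi 0)) (nhds (ENNReal.ofReal ‖commEta c φ η b f g - L‖)) :=
    ENNReal.tendsto_ofReal (hL.const_sub _).norm
  refine le_of_tendsto hlim ?_
  filter_upwards [Ioo_mem_nhdsGT hη] with ε hε
  refine (truncation_diff hA hK (by positivity) hM hb.continuous hlip hη hε.1 hε.2 hφs.continuous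
    hφ0 hφ1 hφr hf g).trans (hnear.trans_eq ?_)
  congr 2
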